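/- arXiv:2009.00554 — 2 statements merged into one kernel-verified Lean document; each statement's English description precedes it below -/
import Mathlib

section
/- Let n ≥ 2 and let SG_n = Cay(S_n, {(1 2),(1 3),…,(1 n)}) be the star graph. Then there exists a set K of permutations of {1,…,n} with |K| = n!/2 + 1 such that the subgraph of SG_n induced by K has maximum degree at most 1. -/
/-!
Let `F` be the set of permutations fixing no point other than possibly `a`, and let `K` be the set
of `w` for which membership in `F` is equivalent to `w` having sign `ε = (-1) ^ (m + 1)`, where `m`
is the number of points. Moving along an edge `π ↦ (a r) π` changes the sign, so an edge inside `K`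
has exactly one end in `F`. If `π ∈ F` this forces `r = π⁻¹ a`, the only point that can become
fixed; if `π ∉ F` then `r` must be the unique point other than `a` fixed by `π`. Hence `K` induces
degree at most one.

The signs over `F` sum to the determinant of the all-ones matrix with its diagonal zeroed except at
`a`, which is `ε`, while the signs over all permutations sum to `0`. So `|K| - |Kᶜ|`, being the sum
of `ε * sign w * (2 * [w ∈ F] - 1)` over all `w`, equals `2`.
-/

open Equiv Equiv.Perm Finset

lemma two_mul_card_filter_iff_eq {ι : Type*} [Fintype ι] (p : ι → Prop) [DecidablePred p]
    (σ : ι → ℤˣ) (ε : ℤˣ) :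
    2 * (#{i | p i ↔ σ i = ε} : ℤ) =
      Fintype.card ι + ε * (2 * ∑ i with p i, (σ i : ℤ) - ∑ i, (σ i : ℤ)) := by
  have pointwise (i : ι) : 2 * (if p i ↔ σ i = ε then 1 else 0 : ℤ) =
      1 + ε * (2 * (if p i then (σ i : ℤ) else 0) - σ i) := by
    rcases Int.units_eq_one_or ε with rfl | rfl <;>
      rcases Int.units_eq_one_or (σ i) with hσ | hσ <;>
      by_cases hp : p i <;> simp [hσ, hp]
  calc 2 * (#{i | p i ↔ σ i = ε} : ℤ)
      = ∑ i, 2 * (if p i ↔ σ i = ε then 1 else 0 : ℤ) := by rw [← mul_sum, sum_boole]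
    _ = ∑ i, (1 + ε * (2 * (if p i then (σ i : ℤ) else 0) - σ i)) :=
        sum_congr rfl fun i _ => pointwise i
    _ = _ := by
        rw [sum_add_distrib, ← mul_sum, sum_sub_distrib, ← mul_sum, sum_filter]
        simp

section SignSums

variable {α : Type*} [Fintype α] [DecidableEq α]

lemma det_of_boole (R : Type*) [CommRing R] (r : α → α → Prop) [DecidableRel r] :
    (Matrix.of fun i j => if r i j then (1 : R) else 0).det =
      ∑ w : Perm α with ∀ i, r (w i) i, ((sign w : ℤ) : R) := by
  simp only [Matrix.det_apply', Matrix.of_apply, Fintype.prod_boole, mul_ite, mul_one, mul_zero,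
    sum_filter]

lemma sum_sign_eq_zero [Nontrivial α] : ∑ w : Perm α, (sign w : ℤ) = 0 := by
  obtain ⟨i, j, hij⟩ := exists_pair_ne α
  have det_ones : (Matrix.of fun _ _ : α => (1 : ℤ)).det = 0 :=
    Matrix.det_zero_of_row_eq hij rfl
  simpa [Matrix.det_apply'] using det_ones

lemma det_updateRow_neg_one_one (R : Type*) [CommRing R] (a : α) :
    ((-1 : Matrix α α R).updateRow a 1).det = (-1) ^ (Fintype.card α + 1) := by
  have row_eq : (1 : α → R) = ∑ k, (-1 : R) • (-1 : Matrix α α R) k := by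
    ext j
    simp [Matrix.one_apply]
  rw [row_eq, Matrix.det_updateRow_sum (-1 : Matrix α α R) a fun _ => -1, Matrix.det_neg,
    Matrix.det_one, smul_eq_mul, mul_one, pow_succ']

lemma det_ones_zero_diag_except (R : Type*) [CommRing R] (a : α) :
    (Matrix.of fun i j => if i = j → j = a then (1 : R) else 0).det =
      (-1) ^ (Fintype.card α + 1) := by
  -- Subtracting row `a`, which is all ones, from the other rows turns them into those of `-1`.
  rw [← det_updateRow_neg_one_one R a]
  refine Matrix.det_eq_of_forall_row_eq_smul_add_const (fun i => if i = a then 0 else 1) a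
    (if_pos rfl) fun i j => ?_
  by_cases hi : i = a
  · simp [hi, eq_comm]
  · by_cases hij : i = j
    · subst hij
      simp [hi]
    · simp [hi, hij]

end SignSums

/-- `w` has no fixed point other than possibly `a`. Between two adjacent vertices of
`permStarGraph a` on which this property differs, the transposition is determined by either end. -/
def FixesAtMost {α : Type*} (a : α) (w : Perm α) : Prop := ∀ x, w x = x → x = a

namespace FixesAtMost

variable {α : Type*} [DecidableEq α] {a r : α} {π : Perm α}

instance [Fintype α] : DecidablePred (FixesAtMost a) :=
  fun w => inferInstanceAs (Decidable (∀ x, w x = x → x = a))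

lemma sum_sign [Fintype α] (a : α) :
    ∑ w with FixesAtMost a w, (sign w : ℤ) = (-1) ^ (Fintype.card α + 1) := by
  rw [← det_ones_zero_diag_except ℤ a, det_of_boole]
  rfl

lemma eq_symm_apply_of_not_swap_mul (hπ : FixesAtMost a π)
    (h : ¬ FixesAtMost a (swap a r * π)) : r = π.symm a := by
  obtain ⟨x, hx, hxa⟩ : ∃ x, swap a r (π x) = x ∧ x ≠ a := by
    simpa [FixesAtMost] using h
  have hπx : π x = swap a r x := swap_apply_eq_iff.mp hx
  have hxr : x = r := by
    by_contra hne
    exact hxa (hπ x (hπx.trans (swap_apply_of_ne_of_ne hxa hne)))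
  rw [eq_symm_apply, ← hxr, hπx, hxr, swap_apply_right]

lemma eq_of_swap_mul {y : α} (h : FixesAtMost a (swap a r * π)) (hy : π y = y) (hya : y ≠ a) :
    r = y := by
  by_contra hr
  refine hya (h y ?_)
  rw [Perm.mul_apply, hy, swap_apply_of_ne_of_ne hya (Ne.symm hr)]

lemma exists_forall_swap_mul_iff_not (a : α) (π : Perm α) :
    ∃ s, ∀ r, (FixesAtMost a (swap a r * π) ↔ ¬ FixesAtMost a π) → r = s := by
  by_cases hπ : FixesAtMost a π
  · exact ⟨π.symm a, fun r h => hπ.eq_symm_apply_of_not_swap_mul fun h' => h.1 h' hπ⟩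
  · obtain ⟨y, hy, hya⟩ : ∃ y, π y = y ∧ y ≠ a := by
      simpa [FixesAtMost] using hπ
    exact ⟨y, fun r h => (h.2 hπ).eq_of_swap_mul hy hya⟩

end FixesAtMost

/-- The star graph on the permutations of `α` with centre `a`, whose edges join `π` to
`swap a r * π` for `r ≠ a`. Inversion identifies it with the Cayley graph in which the same
transpositions multiply on the right. -/
def permStarGraph {α : Type*} [DecidableEq α] (a : α) : SimpleGraph (Perm α) :=
  SimpleGraph.fromRel fun π τ => ∃ r, r ≠ a ∧ τ = swap a r * π

lemma permStarGraph_adj {α : Type*} [DecidableEq α] {a : α} {π τ : Perm α} :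
    (permStarGraph a).Adj π τ ↔ ∃ r, r ≠ a ∧ τ = swap a r * π := by
  rw [permStarGraph, SimpleGraph.fromRel_adj]
  constructor
  · rintro ⟨-, h | ⟨r, hr, rfl⟩⟩
    · exact h
    · exact ⟨r, hr, (swap_mul_self_mul a r τ).symm⟩
  · rintro ⟨r, hr, rfl⟩
    exact ⟨fun h => hr (swap_eq_one_iff.mp (right_eq_mul.mp h)).symm, Or.inl ⟨r, hr, rfl⟩⟩

/-- The permutations that fix at most `a` exactly when their sign is `(-1) ^ (|α| + 1)`, the sign
of a cycle through all of `α`. They form the large vertex set of small induced degree in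
`permStarGraph a`. -/
def signMatchedPerms {α : Type*} [Fintype α] [DecidableEq α] (a : α) : Set (Perm α) :=
  {w | FixesAtMost a w ↔ sign w = (-1) ^ (Fintype.card α + 1)}

section SignMatchedPerms

variable {α : Type*} [Fintype α] [DecidableEq α] {a r : α} {π : Perm α}

lemma mem_signMatchedPerms :
    π ∈ signMatchedPerms a ↔ (FixesAtMost a π ↔ sign π = (-1) ^ (Fintype.card α + 1)) :=
  Iff.rfl

lemma ncard_signMatchedPerms [Nontrivial α] (a : α) :
    (signMatchedPerms a).ncard = (Fintype.card α).factorial / 2 + 1 := by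
  have two_mul_card := two_mul_card_filter_iff_eq (FixesAtMost a) sign
    ((-1) ^ (Fintype.card α + 1))
  have sq_eq_one : ((-1 : ℤ) ^ (Fintype.card α + 1)) * (-1) ^ (Fintype.card α + 1) = 1 := by
    rw [← mul_pow, neg_one_mul, neg_neg, one_pow]
  rw [FixesAtMost.sum_sign, sum_sign_eq_zero, Fintype.card_perm, sub_zero, Units.val_pow_eq_pow_val,
    Units.val_neg, Units.val_one, mul_left_comm, sq_eq_one] at two_mul_card
  rw [signMatchedPerms, Set.ncard_eq_toFinset_card', Set.toFinset_ofPred]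
  omega

lemma fixesAtMost_swap_mul_iff_not (hr : r ≠ a) (hπ : π ∈ signMatchedPerms a)
    (h : swap a r * π ∈ signMatchedPerms a) :
    FixesAtMost a (swap a r * π) ↔ ¬ FixesAtMost a π := by
  rw [mem_signMatchedPerms.mp h, mem_signMatchedPerms.mp hπ, Perm.sign_mul, sign_swap hr.symm,
    neg_one_mul, neg_eq_iff_eq_neg, ← ne_eq, Int.units_ne_iff_eq_neg]

lemma ncard_permStarGraph_adj_signMatchedPerms_le_one (hπ : π ∈ signMatchedPerms a) :
    {τ ∈ signMatchedPerms a | (permStarGraph a).Adj π τ}.ncard ≤ 1 := by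
  obtain ⟨s, hs⟩ := FixesAtMost.exists_forall_swap_mul_iff_not a π
  have eq_swap_mul : ∀ τ ∈ signMatchedPerms a, (permStarGraph a).Adj π τ → τ = swap a s * π := by
    intro τ hτ hadj
    obtain ⟨r, hr, rfl⟩ := permStarGraph_adj.mp hadj
    rw [hs r (fixesAtMost_swap_mul_iff_not hr hπ hτ)]
  rw [Set.ncard_le_one_iff]
  rintro τ τ' ⟨hτ, hadj⟩ ⟨hτ', hadj'⟩
  rw [eq_swap_mul τ hτ hadj, eq_swap_mul τ' hτ' hadj']

end SignMatchedPerms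

theorem stmt4_general {α : Type*} [Fintype α] [DecidableEq α] [Nontrivial α] (a : α) :
    ∃ K : Set (Perm α),
      K.ncard = (Fintype.card α).factorial / 2 + 1 ∧
      ∀ π ∈ K, {τ ∈ K | (permStarGraph a).Adj π τ}.ncard ≤ 1 :=
  ⟨signMatchedPerms a, ncard_signMatchedPerms a,
    fun _ => ncard_permStarGraph_adj_signMatchedPerms_le_one⟩

/-- The star graph `SG_n = Cay(S_n, {(1 2),…,(1 n)})` (vertices: permutations of
`Fin n`, with `1` corresponding to `0`) has an induced subgraph on exactly
`n!/2 + 1` vertices of maximum degree at most `1`. -/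
theorem stmt4 (n : ℕ) [NeZero n] (hn : 2 ≤ n)
    (SG : SimpleGraph (Equiv.Perm (Fin n)))
    (hSG : SG = SimpleGraph.fromRel
      (fun π τ => ∃ r : Fin n, r ≠ 0 ∧ τ = Equiv.swap 0 r * π)) :
    ∃ K : Set (Equiv.Perm (Fin n)),
      K.ncard = Nat.factorial n / 2 + 1 ∧
      ∀ π ∈ K, ({τ ∈ K | SG.Adj π τ} : Set (Equiv.Perm (Fin n))).ncard ≤ 1 := by
  have : Nontrivial (Fin n) := Fin.nontrivial_iff_two_le.mpr hn
  simpa only [hSG, permStarGraph, Fintype.card_fin] using stmt4_general (0 : Fin n)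
end

section
/- Let m ≥ 1 and N = 2m+1, and let Γ = S_N if m is odd and Γ = A_N if m is even. Suppose C = {c_k | m+1 ≤ k ≤ N} ⊆ Γ is any set of permutations such that each c_k has order 2, c_k(k) = k, and c_k(i) ≤ m for every i with m+1 ≤ i ≤ N and i ≠ k. Then the set M = {π ∈ Γ | π(1) ≥ m+1} has exactly (m+1)·|Γ|/(2m+1) elements and every element of M has exactly one neighbor in M in the Cayley graph Cay(Γ, C). -/
/-! `Γ` is transitive, so the nonempty fibres of `π ↦ π 1` are the cosets of a point stabilizer, and
all `N` of them have the same size; `M` is the union of the fibres over `S = {m + 1, …, N}`. A step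
in the Cayley graph along `c k` replaces the image `x` of `1` by `c k x`, and for `x ∈ S` the only
`c k` that keeps the image in `S` is `c x`. -/

open MulAction

theorem isPretransitive_of_subgroup_le {G α : Type*} [Group G] [MulAction G α] {H K : Subgroup G}
    [IsPretransitive H α] (h : H ≤ K) : IsPretransitive K α :=
  .of_smul_eq (Subgroup.inclusion h) rfl

theorem isPretransitive_of_alternatingGroup_le {α : Type*} [Fintype α] [DecidableEq α]
    {Γ : Subgroup (Equiv.Perm α)} (hα : 3 ≤ Nat.card α) (h : alternatingGroup α ≤ Γ) :
    IsPretransitive Γ α :=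
  have := alternatingGroup.isPretransitive_of_three_le_card α hα
  isPretransitive_of_subgroup_le h

section Transporter

variable {G α : Type*} [Group G] [MulAction G α]

theorem ncard_setOf_smul_mem [IsPretransitive G α] (a : α) (S : Set α) :
    {g : G | g • a ∈ S}.ncard = Nat.card (stabilizer G a) * S.ncard := by
  have hsurj : Function.Surjective (ofQuotientStabilizer G a) :=
    .of_comp (g := QuotientGroup.mk) (surjective_smul G a)
  calc {g : G | g • a ∈ S}.ncard
      = Nat.card (QuotientGroup.mk (s := stabilizer G a) ⁻¹' (ofQuotientStabilizer G a ⁻¹' S)) :=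
        rfl
    _ = Nat.card (stabilizer G a) * (ofQuotientStabilizer G a ⁻¹' S).ncard :=
        QuotientGroup.card_preimage_mk _ _
    _ = Nat.card (stabilizer G a) * S.ncard := by
        rw [Set.ncard_preimage_of_injective_subset_range (injective_ofQuotientStabilizer G a)
          (hsurj.range_eq ▸ S.subset_univ)]

theorem ncard_setOf_smul_mem_mul_card [IsPretransitive G α] (a : α) (S : Set α) :
    {g : G | g • a ∈ S}.ncard * Nat.card α = S.ncard * Nat.card G := by
  rw [ncard_setOf_smul_mem, mul_right_comm, ← index_stabilizer_of_transitive G a,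
    Subgroup.card_mul_index, mul_comm]

theorem ncard_setOf_mem_and_smul_mem_mul_card (Γ : Subgroup G) [IsPretransitive Γ α] (a : α)
    (S : Set α) :
    {g : G | g ∈ Γ ∧ g • a ∈ S}.ncard * Nat.card α = S.ncard * Nat.card Γ := by
  have himage : {g : G | g ∈ Γ ∧ g • a ∈ S} = (↑) '' {g : Γ | g • a ∈ S} := by
    ext g
    simp [Subgroup.smul_def, and_comm]
  rw [himage, Set.ncard_image_of_injective _ Subtype.val_injective, ncard_setOf_smul_mem_mul_card]

theorem existsUnique_eq_mul_of_smul_notMem {ι : Type*} {Γ : Subgroup G} {a : α} {S : Set α}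
    {I : Set ι} {label : α → ι} {c : ι → G} (hmem : ∀ i ∈ I, c i ∈ Γ)
    (hlabel : Set.MapsTo label S I) (hstay : ∀ x ∈ S, c (label x) • x ∈ S)
    (hleave : ∀ i ∈ I, ∀ x ∈ S, label x ≠ i → c i • x ∉ S) {π : G} (hπ : π ∈ Γ)
    (hπa : π • a ∈ S) : ∃! τ, (τ ∈ Γ ∧ τ • a ∈ S) ∧ ∃ i ∈ I, τ = c i * π := by
  have hI : label (π • a) ∈ I := hlabel hπa
  refine ⟨c (label (π • a)) * π, ⟨⟨Γ.mul_mem (hmem _ hI) hπ, ?_⟩, _, hI, rfl⟩, ?_⟩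
  · rw [mul_smul]
    exact hstay _ hπa
  · rintro _ ⟨⟨-, hτa⟩, i, hi, rfl⟩
    rw [mul_smul] at hτa
    rw [not_imp_not.1 (hleave i hi _ hπa) hτa]

end Transporter

theorem ncard_setOf_le_fin_val (m n : ℕ) : {x : Fin n | m ≤ (x : ℕ)}.ncard = n - m := by
  have himage : Fin.val '' {x : Fin n | m ≤ (x : ℕ)} = Finset.Ico m n := by
    ext k
    simp [Fin.exists_iff]
  rw [← Set.ncard_image_of_injective _ Fin.val_injective, himage, Set.ncard_coe_finset,
    Nat.card_Ico]

theorem stmt7_general {G α ι : Type*} [Group G] [MulAction G α] (Γ : Subgroup G) [Finite Γ]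
    [IsPretransitive Γ α] (a : α) (S : Set α) (I : Set ι) (label : α → ι) (c : ι → G)
    (hmem : ∀ i ∈ I, c i ∈ Γ) (hlabel : Set.MapsTo label S I)
    (hstay : ∀ x ∈ S, c (label x) • x ∈ S)
    (hleave : ∀ i ∈ I, ∀ x ∈ S, label x ≠ i → c i • x ∉ S)
    (M : Set G) (hM : M = {π | π ∈ Γ ∧ π • a ∈ S}) :
    M.ncard * Nat.card α = S.ncard * Nat.card Γ ∧
    ∀ π ∈ M, ∃! τ, τ ∈ M ∧ ∃ i ∈ I, τ = c i * π := by
  subst hM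
  exact ⟨ncard_setOf_mem_and_smul_mem_mul_card Γ a S,
    fun π hπ => existsUnique_eq_mul_of_smul_notMem hmem hlabel hstay hleave hπ.1 hπ.2⟩

/-- For `N = 2m+1` and `Γ = S_N` (`m` odd) resp. `Γ = A_N` (`m` even): if
`C = {c_k | m+1 ≤ k ≤ N} ⊆ Γ` consists of order-2 permutations with `c_k(k) = k`
and `c_k(i) ≤ m` for all `m+1 ≤ i ≤ N` with `i ≠ k`, then `M = {π ∈ Γ | π(1) ≥ m+1}`
has exactly `(m+1)·|Γ|/(2m+1)` elements and every element of `M` has exactly one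
neighbor in `M` in `Cay(Γ, C)` (neighbors of `π` are the products `c_k * π`, i.e.
`π·c_k` in the paper's convention).  `{1,…,N}` is modelled by `Fin N` via the
1-based value `(i : ℕ) + 1`. -/
theorem stmt7 (m : ℕ) (hm : 1 ≤ m) (N : ℕ) (hN : N = 2 * m + 1)
    (Γ : Subgroup (Equiv.Perm (Fin N)))
    (hΓ : Γ = if Odd m then (⊤ : Subgroup (Equiv.Perm (Fin N)))
              else alternatingGroup (Fin N))
    (c : ℕ → Equiv.Perm (Fin N))
    (hmem : ∀ k, m + 1 ≤ k → k ≤ N → c k ∈ Γ)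
    (hord : ∀ k, m + 1 ≤ k → k ≤ N → c k * c k = 1 ∧ c k ≠ 1)
    (hfix : ∀ k (h1 : m + 1 ≤ k) (h2 : k ≤ N),
      c k ⟨k - 1, by omega⟩ = (⟨k - 1, by omega⟩ : Fin N))
    (hsmall : ∀ k, m + 1 ≤ k → k ≤ N → ∀ i : Fin N,
      m + 1 ≤ (i : ℕ) + 1 → (i : ℕ) + 1 ≠ k → ((c k i : ℕ) + 1) ≤ m)
    (M : Set (Equiv.Perm (Fin N)))
    (hM : M = {π | π ∈ Γ ∧ m + 1 ≤ ((π ⟨0, by omega⟩ : Fin N) : ℕ) + 1}) :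
    M.ncard * (2 * m + 1) = (m + 1) * Nat.card Γ ∧
    ∀ π ∈ M, ∃! τ, τ ∈ M ∧ ∃ k, m + 1 ≤ k ∧ k ≤ N ∧ τ = c k * π := by
  subst hN
  have hA : alternatingGroup (Fin (2 * m + 1)) ≤ Γ := by
    rw [hΓ]
    split_ifs
    exacts [le_top, le_rfl]
  have := isPretransitive_of_alternatingGroup_le (by rw [Nat.card_fin]; omega) hA
  have hcard : {x : Fin (2 * m + 1) | m + 1 ≤ (x : ℕ) + 1}.ncard = m + 1 := by
    simp only [add_le_add_iff_right, ncard_setOf_le_fin_val]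
    omega
  have hstay (x : Fin (2 * m + 1)) (hx : m + 1 ≤ (x : ℕ) + 1) :
      m + 1 ≤ (c (x + 1) x : ℕ) + 1 := by
    have hfixed : c (x + 1) x = x := hfix (x + 1) hx x.2
    rwa [hfixed]
  simpa only [hcard, Nat.card_fin, Set.mem_Icc, and_assoc] using
    stmt7_general Γ ⟨0, by omega⟩ {x : Fin (2 * m + 1) | m + 1 ≤ (x : ℕ) + 1} (Set.Icc (m + 1) _)
      (fun x => (x : ℕ) + 1) c (fun k hk => hmem k hk.1 hk.2) (fun x hx => ⟨hx, x.2⟩) hstay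
      (fun k hk x hx hne => (hsmall k hk.1 hk.2 x hx hne).not_gt) M hM
end
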